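/- arXiv:1005.4596 — 2 statements merged into one kernel-verified Lean document; each statement's English description precedes it below -/
import Mathlib

section
/- Let n ≥ 2 be an integer such that g_n(X) = X^n + X − 1 is irreducible over ℚ, let θ_n ∈ ℂ be a root of g_n, and let r be a nonzero integer. Then the discriminant of rθ_n, i.e. the discriminant of the ℚ-basis (1, rθ_n, …, (rθ_n)^{n−1}) of K_n = ℚ(θ_n), equals (−1)^{(n−1)(n−2)/2} · r^{n(n−1)} · (n^n + (n−1)^{n−1}). -/
open Polynomial IntermediateField

/-!
Let `x` be a root of `f = X ^ n + a X + b` generating `L` over `K`. The discriminant of the powers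
of `x` is, up to sign, the norm of `f'(x)` (both vanish if `L / K` is inseparable), and substituting
`x ^ n = -a x - b` makes `x f'(x)` linear in `x`: it equals `-n b - (n - 1) a x`. The norm of
`d - c x` is the value at `d` of the polynomial obtained from `f` by multiplying its roots by `c`,
so it is explicit; dividing by the norm of `x`, which is `(-1) ^ n b`, yields the discriminant of
`f`. Replacing `x` by `r x` is a diagonal change of basis of determinant `r ^ (n (n - 1) / 2)`,
which enters squared.
-/

section Discr

variable {A B : Type*} [CommRing A] [CommRing B] [Algebra A B]

lemma discr_algebraMap_mul {ι : Type*} [Fintype ι] [DecidableEq ι] (c : ι → A) (b : ι → B) :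
    Algebra.discr A (fun i => algebraMap A B (c i) * b i) =
      (∏ i, c i) ^ 2 * Algebra.discr A b := by
  rw [← Matrix.det_diagonal, ← Algebra.discr_of_matrix_mulVec, Matrix.diagonal_map (map_zero _)]
  congr 1
  ext i
  rw [Matrix.mulVec_diagonal]

lemma discr_algebraMap_mul_pow (n : ℕ) (c : A) (x : B) :
    Algebra.discr A (fun i : Fin n => (algebraMap A B c * x) ^ (i : ℕ)) =
      c ^ (n * (n - 1)) * Algebra.discr A (fun i : Fin n => x ^ (i : ℕ)) := by
  simp only [mul_pow, ← map_pow]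
  rw [discr_algebraMap_mul, Finset.prod_pow_eq_pow_sum, ← pow_mul,
    Fin.sum_univ_eq_sum_range (fun i => i), Finset.sum_range_id_mul_two]

lemma discr_gen_pow (pb : PowerBasis A B) {n : ℕ} (hn : pb.dim = n) :
    Algebra.discr A (fun i : Fin n => pb.gen ^ (i : ℕ)) = Algebra.discr A pb.basis := by
  subst hn
  rw [PowerBasis.coe_basis]

end Discr

section Norm

lemma norm_algebraMap_sub_gen {R S : Type*} [CommRing R] [Ring S] [Algebra R S]
    (pb : PowerBasis R S) (d : R) :
    Algebra.norm R (algebraMap R S d - pb.gen) = (minpoly R pb.gen).eval d := by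
  rw [Algebra.norm_eq_matrix_det pb.basis, ← charpoly_leftMulMatrix, Matrix.eval_charpoly,
    map_sub, AlgHom.commutes, Matrix.algebraMap_eq_diagonal]
  rfl

lemma norm_algebraMap_sub_algebraMap_mul_gen {K S : Type*} [Field K] [Ring S] [Algebra K S]
    (pb : PowerBasis K S) (d c : K) :
    Algebra.norm K (algebraMap K S d - algebraMap K S c * pb.gen) =
      ((minpoly K pb.gen).scaleRoots c).eval d := by
  rcases eq_or_ne c 0 with rfl | hc
  · rw [map_zero, zero_mul, sub_zero, scaleRoots_zero, minpoly.monic pb.isIntegral_gen, one_smul,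
      eval_pow, eval_X, pb.natDegree_minpoly, Algebra.norm_algebraMap_of_basis pb.basis,
      Fintype.card_fin]
  · obtain ⟨y, rfl⟩ : ∃ y, d = c * y := ⟨d / c, (mul_div_cancel₀ d hc).symm⟩
    rw [scaleRoots_eval_mul, pb.natDegree_minpoly, map_mul, ← mul_sub, map_mul,
      norm_algebraMap_sub_gen, Algebra.norm_algebraMap_of_basis pb.basis, Fintype.card_fin]

end Norm

section FieldExtension

variable {K L : Type*} [Field K] [Field L] [Algebra K L]

lemma exists_powerBasis_gen_eq {x : L} (hx : IsIntegral K x) (htop : K⟮x⟯ = ⊤) :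
    ∃ pb : PowerBasis K L, pb.gen = x :=
  ⟨PowerBasis.ofAdjoinEqTop hx
    (Algebra.adjoin_eq_top_of_primitive_element hx.isAlgebraic htop),
    PowerBasis.ofAdjoinEqTop_gen hx _⟩

lemma algebra_isSeparable_of_isSeparable_gen (pb : PowerBasis K L) (h : IsSeparable K pb.gen) :
    Algebra.IsSeparable K L := by
  rw [← separableClosure.eq_top_iff, eq_top_iff,
    ← adjoin_eq_top_of_algebra K _ pb.adjoin_gen_eq_top, adjoin_simple_le_iff]
  exact mem_separableClosure_iff.2 h

lemma discr_basis_eq_norm_aeval_derivative_minpoly (pb : PowerBasis K L) :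
    Algebra.discr K pb.basis = (-1) ^ (pb.dim * (pb.dim - 1) / 2) *
      Algebra.norm K (aeval pb.gen (derivative (minpoly K pb.gen))) := by
  have := pb.finite
  by_cases hsep : Algebra.IsSeparable K L
  · rw [Algebra.discr_powerBasis_eq_norm, pb.finrank]
  · have hderiv : derivative (minpoly K pb.gen) = 0 := by
      by_contra h
      exact hsep (algebra_isSeparable_of_isSeparable_gen pb
        ((separable_iff_derivative_ne_zero (minpoly.irreducible pb.isIntegral_gen)).2 h))
    have htrace : Algebra.traceMatrix K pb.basis = 0 := by
      ext i j
      simp [Algebra.traceMatrix_apply, Algebra.trace_eq_zero_of_not_isSeparable hsep]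
    have : Nonempty (Fin pb.dim) := pb.basis.index_nonempty
    rw [hderiv, map_zero, Algebra.norm_zero, mul_zero, Algebra.discr_def, htrace,
      Matrix.det_zero]

lemma coeff_zero_minpoly_gen_ne_zero (pb : PowerBasis K L) (hdim : pb.dim ≠ 1) :
    (minpoly K pb.gen).coeff 0 ≠ 0 := by
  refine minpoly.coeff_zero_ne_zero pb.isIntegral_gen fun hgen => hdim ?_
  rw [← pb.natDegree_minpoly, hgen, minpoly.zero, natDegree_X]

end FieldExtension

section Trinomial

variable {n : ℕ}

lemma degree_C_mul_X_add_C_lt {R : Type*} [Semiring R] (hn : 2 ≤ n) (a b : R) :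
    degree (C a * X + C b) < (n : WithBot ℕ) :=
  degree_linear_lt.trans_le (by exact_mod_cast hn)

lemma monic_X_pow_add_C_mul_X_add_C {R : Type*} [Semiring R] (hn : 2 ≤ n) (a b : R) :
    (X ^ n + C a * X + C b).Monic := by
  rw [add_assoc]
  exact monic_X_pow_add (degree_C_mul_X_add_C_lt hn a b)

lemma natDegree_X_pow_add_C_mul_X_add_C {R : Type*} [Semiring R] [Nontrivial R] (hn : 2 ≤ n)
    (a b : R) : (X ^ n + C a * X + C b).natDegree = n := by
  rw [add_assoc, natDegree_add_eq_left_of_degree_lt, natDegree_X_pow]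
  rw [degree_X_pow]
  exact degree_C_mul_X_add_C_lt hn a b

lemma scaleRoots_X_pow_add_C_mul_X_add_C {R : Type*} [CommSemiring R] [Nontrivial R] (hn : 2 ≤ n)
    (a b c : R) :
    (X ^ n + C a * X + C b).scaleRoots c = X ^ n + C (a * c ^ (n - 1)) * X + C (b * c ^ n) := by
  ext i
  rw [coeff_scaleRoots, natDegree_X_pow_add_C_mul_X_add_C hn]
  simp only [coeff_add, coeff_X_pow, coeff_C_mul, coeff_X, coeff_C]
  rcases i with _ | _ | i
  · simp [show 0 ≠ n by lia]
  · simp [show 1 ≠ n by lia]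
  · rcases eq_or_ne (i + 2) n with rfl | hi
    · simp
    · simp [hi]

lemma mul_aeval_derivative_of_aeval_X_pow_add_C_mul_X_add_C_eq_zero {R S : Type*} [CommRing R]
    [CommRing S] [Algebra R S] {a b : R} {x : S} (hn : n ≠ 0)
    (hx : aeval x (X ^ n + C a * X + C b) = 0) :
    x * aeval x (derivative (X ^ n + C a * X + C b)) =
      algebraMap R S (-(n * b)) - algebraMap R S ((n - 1 : ℕ) * a) * x := by
  obtain ⟨m, rfl⟩ := Nat.exists_eq_succ_of_ne_zero hn
  simp only [map_add, map_mul, map_pow, aeval_X, aeval_C, Nat.succ_eq_add_one] at hx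
  simp only [derivative_X_pow, derivative_C_mul, derivative_X, derivative_C,
    Nat.succ_eq_add_one, Nat.add_sub_cancel, map_add, map_mul, map_neg, map_pow, map_natCast,
    map_one, map_zero, aeval_X, aeval_C]
  push_cast
  linear_combination (m + 1 : S) * hx

variable {K : Type*} [Field K] {a b : K}

lemma dim_eq_of_minpoly_eq_X_pow_add_C_mul_X_add_C {S : Type*} [Ring S] [Algebra K S]
    (pb : PowerBasis K S) (hn : 2 ≤ n) (hmin : minpoly K pb.gen = X ^ n + C a * X + C b) :
    pb.dim = n := by
  rw [← pb.natDegree_minpoly, hmin, natDegree_X_pow_add_C_mul_X_add_C hn]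

lemma norm_aeval_derivative_X_pow_add_C_mul_X_add_C {S : Type*} [CommRing S] [Algebra K S]
    (pb : PowerBasis K S) (hn : 2 ≤ n) (hb : b ≠ 0)
    (hmin : minpoly K pb.gen = X ^ n + C a * X + C b) :
    Algebra.norm K (aeval pb.gen (derivative (X ^ n + C a * X + C b))) =
      (-1) ^ (n - 1) * (n ^ n * (-b) ^ (n - 1) + (n - 1 : ℕ) ^ (n - 1) * a ^ n) := by
  have hnorm : Algebra.norm K pb.gen = (-1) ^ n * b := by
    rw [Algebra.PowerBasis.norm_gen_eq_coeff_zero_minpoly, hmin,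
      dim_eq_of_minpoly_eq_X_pow_add_C_mul_X_add_C pb hn hmin]
    simp [show 0 ≠ n by lia]
  have hroot : aeval pb.gen (X ^ n + C a * X + C b) = 0 := hmin ▸ minpoly.aeval K pb.gen
  have hlin := congrArg (Algebra.norm K)
    (mul_aeval_derivative_of_aeval_X_pow_add_C_mul_X_add_C_eq_zero (by lia) hroot)
  rw [map_mul, norm_algebraMap_sub_algebraMap_mul_gen, hnorm, hmin,
    scaleRoots_X_pow_add_C_mul_X_add_C hn] at hlin
  refine mul_left_cancel₀ (show (-1) ^ n * b ≠ 0 by simp [hb]) (hlin.trans ?_)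
  obtain ⟨m, rfl⟩ := Nat.exists_eq_add_of_le' (show 1 ≤ n by lia)
  have hsq : (-1 : K) ^ m * (-1) ^ m = 1 := pow_mul_pow_eq_one m (by simp)
  simp only [eval_add, eval_mul, eval_pow, eval_X, eval_C, Nat.add_sub_cancel,
    neg_mul_eq_mul_neg, mul_pow]
  push_cast
  linear_combination b * ((m + 1) ^ (m + 1) * (-b) ^ m + m ^ m * a ^ (m + 1)) * hsq

variable {L : Type*} [Field L] [Algebra K L]

lemma discr_basis_of_minpoly_eq_X_pow_add_C_mul_X_add_C (pb : PowerBasis K L) (hn : 2 ≤ n)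
    (hmin : minpoly K pb.gen = X ^ n + C a * X + C b) :
    Algebra.discr K pb.basis =
      (-1) ^ ((n - 1) * (n - 2) / 2) *
        (n ^ n * (-b) ^ (n - 1) + (n - 1 : ℕ) ^ (n - 1) * a ^ n) := by
  have hdim : pb.dim = n := dim_eq_of_minpoly_eq_X_pow_add_C_mul_X_add_C pb hn hmin
  have hb : b ≠ 0 := by
    have h := coeff_zero_minpoly_gen_ne_zero pb (by lia)
    simpa [hmin, show 0 ≠ n by lia] using h
  have hexp : n * (n - 1) / 2 = (n - 1) * (n - 2) / 2 + (n - 1) := by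
    obtain ⟨m, rfl⟩ := Nat.exists_eq_add_of_le' (show 1 ≤ n by lia)
    exact Nat.triangle_succ m
  have hsq : (-1 : K) ^ (n - 1) * (-1) ^ (n - 1) = 1 := pow_mul_pow_eq_one _ (by simp)
  rw [discr_basis_eq_norm_aeval_derivative_minpoly, hmin,
    norm_aeval_derivative_X_pow_add_C_mul_X_add_C pb hn hb hmin, hdim, hexp, pow_add, mul_assoc,
    ← mul_assoc _ _ (_ + _), hsq, one_mul]

theorem stmt3_general (hn : 2 ≤ n) (hirr : Irreducible (X ^ n + C a * X + C b)) {θ : L}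
    (hθ : aeval θ (X ^ n + C a * X + C b) = 0) (hgen : K⟮θ⟯ = ⊤) (r : K) :
    Algebra.discr K (fun i : Fin n => (algebraMap K L r * θ) ^ (i : ℕ)) =
      (-1) ^ ((n - 1) * (n - 2) / 2) * r ^ (n * (n - 1)) *
        (n ^ n * (-b) ^ (n - 1) + (n - 1 : ℕ) ^ (n - 1) * a ^ n) := by
  have hmonic := monic_X_pow_add_C_mul_X_add_C hn a b
  have hmin : minpoly K θ = X ^ n + C a * X + C b :=
    (minpoly.eq_of_irreducible_of_monic hirr hθ hmonic).symm
  obtain ⟨pb, rfl⟩ := exists_powerBasis_gen_eq ⟨_, hmonic, hθ⟩ hgen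
  rw [discr_algebraMap_mul_pow,
    discr_gen_pow pb (dim_eq_of_minpoly_eq_X_pow_add_C_mul_X_add_C pb hn hmin),
    discr_basis_of_minpoly_eq_X_pow_add_C_mul_X_add_C pb hn hmin, mul_left_comm, mul_assoc]

end Trinomial

/-- For `n ≥ 2` with `gₙ = Xⁿ + X - 1` irreducible over `ℚ`, `θ` a root of `gₙ`
generating the number field `Kₙ = ℚ(θ)`, and `r` a nonzero integer, the discriminant
of the `ℚ`-basis `(1, rθ, …, (rθ)^{n-1})` of `Kₙ` equals
`(-1)^{(n-1)(n-2)/2} · r^{n(n-1)} · (nⁿ + (n-1)^{n-1})`. -/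
theorem stmt3 (n : ℕ) (hn : 2 ≤ n)
    (hirr : Irreducible ((X : ℚ[X]) ^ n + X - 1))
    (K : Type*) [Field K] [NumberField K]
    (θ : K) (hθ : Polynomial.aeval θ ((X : ℚ[X]) ^ n + X - 1) = 0)
    (hgen : IntermediateField.adjoin ℚ {θ} = ⊤)
    (r : ℤ) (hr : r ≠ 0) :
    Algebra.discr ℚ (fun i : Fin n => ((r : K) * θ) ^ (i : ℕ))
      = (-1 : ℚ) ^ ((n - 1) * (n - 2) / 2) * (r : ℚ) ^ (n * (n - 1))
          * ((n ^ n + (n - 1) ^ (n - 1) : ℕ) : ℚ) := by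
  have hpoly : (X : ℚ[X]) ^ n + X - 1 = X ^ n + C 1 * X + C (-1) := by simp [sub_eq_add_neg]
  simpa using stmt3_general (a := 1) (b := -1) hn (hpoly ▸ hirr) (hpoly ▸ hθ) hgen (r : ℚ)
end

section
/- Let n ≥ 2 be an integer such that g_n(X) = X^n + X − 1 is irreducible over ℚ, let θ_n ∈ ℂ be a root of g_n, let K_n = ℚ(θ_n) with ring of integers ℤ_{K_n}, and let r be a nonzero integer. If p is a rational prime dividing r but not dividing n^n + (n−1)^{n−1}, then the index of the order ℤ[rθ_n] in ℤ_{K_n} (the index of the additive subgroup generated by the ℤ-algebra ℤ[rθ_n] inside ℤ_{K_n}) has p-adic valuation equal to (n(n−1)/2) · v_p(r), where v_p(r) is the p-adic valuation of r. In particular, for r = m^k with m squarefree and p | m, this local index equals k·n(n−1)/2. -/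
open Polynomial IntermediateField NumberField

/-!
Multiplying an integral element `t` of degree `n` by `r` multiplies the `i`-th vector of the basis
`1, t, …, t ^ (n - 1)` of `ℤ[t]` by `r ^ i`, so `ℤ[rt]` has index `|r| ^ (0 + 1 + ⋯ + (n - 1))` in
`ℤ[t]`, and it remains to see that `p` does not divide the index of `ℤ[t]` in the ring of integers.
Now `f'(t)`, where `f` is the minimal polynomial of `t`, lies in the conductor of `ℤ[t]`, and for
`f = X ^ n + a X - b` it divides `n ^ n b ^ (n - 1) + (n - 1) ^ (n - 1) a ^ n`, up to sign the
discriminant of `f`. If `p` does not divide this integer, the index is therefore prime to `p`.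
-/

section Scaling

theorem relIndex_eq_prod_natAbs {E ι : Type*} [AddCommGroup E] [Fintype ι]
    {L₁ L₂ : AddSubgroup E} (hle : L₁ ≤ L₂) (b₁ : Module.Basis ι ℤ L₁.toIntSubmodule)
    (b₂ : Module.Basis ι ℤ L₂.toIntSubmodule) {c : ι → ℤ} (h : ∀ i, (b₁ i : E) = c i • (b₂ i : E)) :
    L₁.relIndex L₂ = ∏ i, (c i).natAbs := by
  classical
  have hb : (fun i ↦ ⟨b₁ i, hle (b₁ i).2⟩ : ι → L₂.toIntSubmodule) = fun i ↦ c i • b₂ i := by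
    ext i
    exact h i
  rw [AddSubgroup.relIndex_eq_natAbs_det L₁ L₂ hle b₁ b₂, hb, AlternatingMap.map_smul_univ,
    b₂.det_self, smul_eq_mul, mul_one]
  exact map_prod Int.natAbsHom c Finset.univ

theorem adjoin_smul_le {R S : Type*} [CommSemiring R] [Semiring S] [Algebra R S] (r : R) (t : S) :
    Algebra.adjoin R {r • t} ≤ Algebra.adjoin R {t} :=
  Algebra.adjoin_singleton_le (Subalgebra.smul_mem _ (Algebra.self_mem_adjoin_singleton R t) r)

variable {S : Type*} [CommRing S] [IsDomain S] [Module.IsTorsionFree ℤ S] {t : S}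

theorem relIndex_adjoin_zsmul (ht : IsIntegral ℤ t) {r : ℤ} (hr : r ≠ 0) :
    (Algebra.adjoin ℤ {r • t}).toSubring.toAddSubgroup.relIndex
        (Algebra.adjoin ℤ {t}).toSubring.toAddSubgroup =
      r.natAbs ^ ((minpoly ℤ t).natDegree * ((minpoly ℤ t).natDegree - 1) / 2) := by
  have hdeg : (minpoly ℤ (r • t)).natDegree = (minpoly ℤ t).natDegree := by
    rw [IsIntegrallyClosed.minpoly_smul hr ht, natDegree_scaleRoots]
  let B := Algebra.adjoin.powerBasis' ht
  let B' := Algebra.adjoin.powerBasis' (ht.smul r)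
  have hdim : B'.dim = B.dim := by simpa [B, B'] using hdeg
  have hbasis (i : Fin B.dim) :
      (B'.basis.reindex (finCongr hdim) i : S) = r ^ (i : ℕ) • (B.basis i : S) := by
    have hval : ((finCongr hdim).symm i : ℕ) = i := rfl
    rw [Module.Basis.reindex_apply, B'.basis_eq_pow, B.basis_eq_pow, hval]
    simp [B, B', mul_pow]
  rw [relIndex_eq_prod_natAbs (adjoin_smul_le r t) _ _ hbasis, Algebra.adjoin.powerBasis'_dim]
  simp_rw [Int.natAbs_pow]
  rw [Fin.prod_univ_eq_prod_range (r.natAbs ^ ·), Finset.prod_pow_eq_pow_sum, Finset.sum_range_id]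

theorem index_adjoin_zsmul (ht : IsIntegral ℤ t) {r : ℤ} (hr : r ≠ 0) :
    (Algebra.adjoin ℤ {r • t}).toSubring.toAddSubgroup.index =
      r.natAbs ^ ((minpoly ℤ t).natDegree * ((minpoly ℤ t).natDegree - 1) / 2) *
        (Algebra.adjoin ℤ {t}).toSubring.toAddSubgroup.index := by
  rw [← relIndex_adjoin_zsmul ht hr, AddSubgroup.relIndex_mul_index (adjoin_smul_le r t)]

theorem padicValNat_index_adjoin_zsmul {p : ℕ} [Fact p.Prime] (ht : IsIntegral ℤ t) {r : ℤ}
    (hr : r ≠ 0) (hp : ¬ p ∣ (Algebra.adjoin ℤ {t}).toSubring.toAddSubgroup.index) :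
    padicValNat p (Algebra.adjoin ℤ {r • t}).toSubring.toAddSubgroup.index =
      (minpoly ℤ t).natDegree * ((minpoly ℤ t).natDegree - 1) / 2 * padicValInt p r := by
  have hne : (Algebra.adjoin ℤ {t}).toSubring.toAddSubgroup.index ≠ 0 :=
    fun h ↦ hp (h ▸ dvd_zero p)
  rw [index_adjoin_zsmul ht hr, padicValNat.mul (pow_ne_zero _ (Int.natAbs_ne_zero.mpr hr)) hne,
    padicValNat.pow, padicValNat.eq_zero_of_not_dvd hp, add_zero, padicValInt]

end Scaling

section Conductor

theorem not_dvd_index_of_zsmul_mem {G : Type*} [AddCommGroup G] [AddGroup.FG G]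
    {N : AddSubgroup G} {d : ℤ} (hN : ∀ g, d • g ∈ N) {p : ℕ} [Fact p.Prime]
    (hp : ¬ (p : ℤ) ∣ d) : ¬ p ∣ N.index := by
  have hd : d ≠ 0 := fun h ↦ hp (h ▸ dvd_zero _)
  have hquot : ∀ q : G ⧸ N, d • q = 0 := by
    rintro ⟨g⟩
    exact (QuotientAddGroup.eq_zero_iff _).mpr (hN g)
  have : Finite (G ⧸ N) := AddCommGroup.finite_of_fg_isAddTorsion _ fun q ↦
    isOfFinAddOrder_iff_zsmul_eq_zero.mpr ⟨d, hd, hquot q⟩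
  intro hdvd
  obtain ⟨q, hq⟩ := exists_prime_addOrderOf_dvd_card' (G := G ⧸ N) p hdvd
  exact hp (hq ▸ addOrderOf_dvd_iff_zsmul_eq_zero.mpr (hquot q))

theorem aeval_derivative_minpoly_mem_conductor (A K L : Type*) {B : Type*} [CommRing A] [Field K]
    [CommRing B] [Field L] [Algebra A K] [Algebra B L] [Algebra A B] [Algebra K L] [Algebra A L]
    [IsScalarTower A K L] [IsScalarTower A B L] [IsDomain A] [IsFractionRing A K]
    [FiniteDimensional K L] [Algebra.IsSeparable K L] [IsIntegralClosure B A L]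
    [IsIntegrallyClosed A] [IsDedekindDomain B] [Module.IsTorsionFree A B] {x : B}
    (hx : Algebra.adjoin K {algebraMap B L x} = ⊤) :
    aeval x (derivative (minpoly A x)) ∈ conductor A x :=
  Ideal.mul_le_left <|
    (conductor_mul_differentIdeal A K L x hx).ge (Ideal.mem_span_singleton_self _)

theorem not_dvd_index_adjoin_of_aeval_derivative_dvd {K : Type*} [Field K] [NumberField K]
    {t : 𝓞 K} (ht : ℚ⟮(t : K)⟯ = ⊤) {d : ℤ}
    (hd : aeval t (derivative (minpoly ℤ t)) ∣ (d : 𝓞 K)) {p : ℕ} [Fact p.Prime]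
    (hp : ¬ (p : ℤ) ∣ d) : ¬ p ∣ (Algebra.adjoin ℤ {t}).toSubring.toAddSubgroup.index := by
  have hadjoin : Algebra.adjoin ℚ {algebraMap (𝓞 K) K t} = ⊤ :=
    Algebra.adjoin_eq_top_of_primitive_element (Algebra.IsAlgebraic.isAlgebraic _) ht
  have : AddGroup.FG (𝓞 K) := Module.Finite.iff_addGroup_fg.mp inferInstance
  have hmem : (d : 𝓞 K) ∈ conductor ℤ t :=
    Ideal.mem_of_dvd _ hd (aeval_derivative_minpoly_mem_conductor ℤ ℚ K hadjoin)
  refine not_dvd_index_of_zsmul_mem (fun z ↦ ?_) hp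
  rw [zsmul_eq_mul]
  exact mem_conductor_iff.mp hmem z

end Conductor

section Trinomial

theorem mul_pow_add_dvd_of_pow_add_mul_sub_eq_zero {R : Type*} [CommRing R] {n : ℕ} (hn : n ≠ 0)
    {a b t : R} (ht : t ^ n + a * t - b = 0) :
    n * t ^ (n - 1) + a ∣ n ^ n * b ^ (n - 1) + ((n - 1 : ℕ) : R) ^ (n - 1) * a ^ n := by
  obtain ⟨m, rfl⟩ := Nat.exists_eq_add_one_of_ne_zero hn
  simp only [Nat.add_sub_cancel]
  set v := ((m + 1 : ℕ) : R) * t ^ m + a with hv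
  have hvb : (v + m * a) * t = (m + 1 : ℕ) * b := by
    rw [hv]
    push_cast
    linear_combination (m + 1 : R) * ht
  have hdvd : v ∣ (v + m * a) ^ m - (m * a) ^ m := by
    simpa using sub_dvd_pow_sub_pow (v + m * a) (m * a) m
  have hD : ((m + 1 : ℕ) : R) ^ (m + 1) * b ^ m + (m : R) ^ m * a ^ (m + 1) =
      v * (v + m * a) ^ m - a * ((v + m * a) ^ m - (m * a) ^ m) := by
    have : ((m + 1 : ℕ) : R) ^ m * b ^ m = (v + m * a) ^ m * t ^ m := by
      rw [← mul_pow, ← hvb, mul_pow]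
    linear_combination ((m + 1 : ℕ) : R) * this - (v + m * a) ^ m * hv
  rw [hD]
  exact dvd_sub (dvd_mul_right _ _) (hdvd.mul_left _)

variable {R : Type*} [CommRing R] {n : ℕ}

theorem degree_C_mul_X_sub_C_lt (hn : 2 ≤ n) (a b : R) : degree (C a * X - C b) < n := by
  have hlt : degree (C a * X - C b) < 2 := by
    simpa [sub_eq_add_neg] using degree_linear_lt (a := a) (b := -b)
  exact hlt.trans_le (Nat.cast_le.mpr hn)

theorem monic_X_pow_add_C_mul_X_sub_C (hn : 2 ≤ n) (a b : R) :
    (X ^ n + C a * X - C b).Monic := by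
  rw [add_sub_assoc]
  exact monic_X_pow_add (degree_C_mul_X_sub_C_lt hn a b)

theorem natDegree_X_pow_add_C_mul_X_sub_C [Nontrivial R] (hn : 2 ≤ n) (a b : R) :
    (X ^ n + C a * X - C b).natDegree = n := by
  rw [add_sub_assoc]
  exact natDegree_eq_of_degree_eq_some
    ((degree_add_eq_left_of_degree_lt (by simpa using degree_C_mul_X_sub_C_lt hn a b)).trans
      (degree_X_pow n))

end Trinomial

theorem padicValInt_pow_of_squarefree {p : ℕ} [Fact p.Prime] {m : ℤ} (hm : Squarefree m)
    (hpm : (p : ℤ) ∣ m) (k : ℕ) : padicValInt p (m ^ k) = k := by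
  have hval : padicValNat p m.natAbs = 1 := by
    rw [← Nat.factorization_def _ Fact.out]
    exact Nat.factorization_eq_one_of_squarefree (Int.squarefree_natAbs.mpr hm) Fact.out
      (Int.natCast_dvd.mp hpm)
  rw [padicValInt, Int.natAbs_pow, padicValNat.pow, hval, mul_one]

theorem minpoly_eq_of_irreducible_map {S : Type*} [CommRing S] [IsDomain S]
    [Module.IsTorsionFree ℤ S] {t : S} {f : ℤ[X]} (hf : f.Monic)
    (hirr : Irreducible (f.map (algebraMap ℤ ℚ))) (ht : aeval t f = 0) : minpoly ℤ t = f := by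
  have hint : IsIntegral ℤ t := ⟨f, hf, ht⟩
  have hirr' : Irreducible f := (hf.irreducible_iff_irreducible_map_fraction_map (K := ℚ)).mpr hirr
  exact eq_of_monic_of_associated (minpoly.monic hint) hf <|
    (minpoly.prime_of_isIntegrallyClosed hint).irreducible.associated_of_dvd hirr'
      (minpoly.isIntegrallyClosed_dvd hint ht)

theorem stmt5_general (n : ℕ) (hn : 2 ≤ n) (a b : ℤ)
    (hirr : Irreducible ((X : ℚ[X]) ^ n + C (a : ℚ) * X - C (b : ℚ)))
    (K : Type*) [Field K] [NumberField K]
    (θ : K) (hθ : aeval θ ((X : ℚ[X]) ^ n + C (a : ℚ) * X - C (b : ℚ)) = 0) (hgen : ℚ⟮θ⟯ = ⊤)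
    (r : ℤ) (hr : r ≠ 0) (p : ℕ) (hp : p.Prime)
    (hpd : ¬ (p : ℤ) ∣ n ^ n * b ^ (n - 1) + ((n - 1 : ℕ) : ℤ) ^ (n - 1) * a ^ n)
    (x : 𝓞 K) (hx : algebraMap (𝓞 K) K x = r * θ) :
    padicValNat p (Algebra.adjoin ℤ {x}).toSubring.toAddSubgroup.index =
        n * (n - 1) / 2 * padicValInt p r ∧
      ∀ (m : ℤ) (k : ℕ), Squarefree m → (p : ℤ) ∣ m → r = m ^ k →
        padicValNat p (Algebra.adjoin ℤ {x}).toSubring.toAddSubgroup.index =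
          k * (n * (n - 1)) / 2 := by
  have : Fact p.Prime := ⟨hp⟩
  have hmonic := monic_X_pow_add_C_mul_X_sub_C hn a b
  have hroot : aeval θ (X ^ n + C a * X - C b : ℤ[X]) = 0 := by simpa using hθ
  obtain ⟨t, rfl⟩ : ∃ t : 𝓞 K, (t : K) = θ := ⟨⟨θ, _, hmonic, hroot⟩, rfl⟩
  obtain rfl : x = r • t := RingOfIntegers.coe_injective (by simpa using hx)
  have ht : t ^ n + a * t - b = 0 := RingOfIntegers.coe_injective (by simpa using hθ)
  have hmin : minpoly ℤ t = X ^ n + C a * X - C b :=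
    minpoly_eq_of_irreducible_map hmonic (by simpa using hirr) (by simpa using ht)
  have hindex : ¬ p ∣ (Algebra.adjoin ℤ {t}).toSubring.toAddSubgroup.index := by
    refine not_dvd_index_adjoin_of_aeval_derivative_dvd hgen ?_ hpd
    simpa [hmin, derivative_X_pow] using mul_pow_add_dvd_of_pow_add_mul_sub_eq_zero (by lia) ht
  have hval := padicValNat_index_adjoin_zsmul (RingOfIntegers.isIntegral t) hr hindex
  rw [hmin, natDegree_X_pow_add_C_mul_X_sub_C hn] at hval
  refine ⟨hval, fun m k hm hpm hrm ↦ ?_⟩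
  rw [hval, hrm, padicValInt_pow_of_squarefree hm hpm, mul_comm,
    Nat.mul_div_assoc k (Nat.even_mul_pred_self n).two_dvd]

/-- For `n ≥ 2` with `gₙ = Xⁿ + X - 1` irreducible over `ℚ`, `θ` a root of `gₙ`
generating the number field `Kₙ = ℚ(θ)`, and `r` a nonzero integer: if a rational
prime `p` divides `r` but not `nⁿ + (n-1)^{n-1}`, then the index of the order
`ℤ[rθ]` in `𝓞 Kₙ` has `p`-adic valuation `(n(n-1)/2) · v_p(r)`.  In particular,
for `r = mᵏ` with `m` squarefree and `p ∣ m`, this local index is `k·n(n-1)/2`. -/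
theorem stmt5 (n : ℕ) (hn : 2 ≤ n)
    (hirr : Irreducible ((X : ℚ[X]) ^ n + X - 1))
    (K : Type*) [Field K] [NumberField K]
    (θ : K) (hθ : Polynomial.aeval θ ((X : ℚ[X]) ^ n + X - 1) = 0)
    (hgen : IntermediateField.adjoin ℚ {θ} = ⊤)
    (r : ℤ) (hr : r ≠ 0)
    (p : ℕ) (hp : p.Prime) (hpr : (p : ℤ) ∣ r)
    (hpd : ¬ (p ∣ n ^ n + (n - 1) ^ (n - 1)))
    (x : 𝓞 K) (hx : algebraMap (𝓞 K) K x = (r : K) * θ) :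
    padicValNat p
        ((Algebra.adjoin ℤ ({x} : Set (𝓞 K))).toSubring.toAddSubgroup.index)
      = (n * (n - 1) / 2) * padicValInt p r
    ∧ (∀ (m : ℤ) (k : ℕ), Squarefree m → (p : ℤ) ∣ m → r = m ^ k →
        padicValNat p
            ((Algebra.adjoin ℤ ({x} : Set (𝓞 K))).toSubring.toAddSubgroup.index)
          = k * (n * (n - 1)) / 2) :=
  stmt5_general n hn 1 1 (by simpa using hirr) K θ (by simpa using hθ) hgen r hr p hp
    (by exact_mod_cast (by simpa using hpd)) x hx
end
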